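/- arXiv:1807.00379 — 6 statements merged into one kernel-verified Lean document; each statement's English description precedes it below -/
import Mathlib

section
/- The dual cone of SDD^n equals the set of symmetric n×n matrices all of whose 2×2 principal submatrices are positive semidefinite; that is, (SDD^n)* = {Q ∈ S^n : ι_{ij}*(Q) ⪰ 0 for all 1 ≤ i < j ≤ n}, where ι_{ij}*(Q) denotes the 2×2 submatrix of Q formed by rows and columns i and j. -/
open Matrix Set

noncomputable section

/-- The embedding `ι_{ij} : S² → Sⁿ` placing a 2×2 symmetric matrix into
rows/columns `i, j` with zeros elsewhere. -/
def iota {n : ℕ} (i j : Fin n) (S : Matrix (Fin 2) (Fin 2) ℝ) :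
    Matrix (Fin n) (Fin n) ℝ :=
  Matrix.of fun r s =>
    (if r = i ∧ s = i then S 0 0 else 0) +
    (if r = i ∧ s = j then S 0 1 else 0) +
    (if r = j ∧ s = i then S 1 0 else 0) +
    (if r = j ∧ s = j then S 1 1 else 0)

/-- The cone `SDDⁿ = Σ_{i<j} ι_{ij}(S²₊)` of scaled diagonally dominant matrices. -/
def SDD (n : ℕ) : Set (Matrix (Fin n) (Fin n) ℝ) :=
  {X | ∃ S : Fin n → Fin n → Matrix (Fin 2) (Fin 2) ℝ,
    (∀ i j : Fin n, (S i j).PosSemidef) ∧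
    X = ∑ i : Fin n, ∑ j : Fin n, if i < j then iota i j (S i j) else 0}

/-- Dual cone within the space of symmetric matrices, w.r.t. the trace inner product. -/
def dualCone {n : ℕ} (C : Set (Matrix (Fin n) (Fin n) ℝ)) :
    Set (Matrix (Fin n) (Fin n) ℝ) :=
  {Y | Y.IsSymm ∧ ∀ X ∈ C, 0 ≤ (X * Y).trace}

theorem trace_iota_mul {n : ℕ} (i j : Fin n) (S : Matrix (Fin 2) (Fin 2) ℝ)
    (Q : Matrix (Fin n) (Fin n) ℝ) :
    (iota i j S * Q).trace = (S * !![Q i i, Q i j; Q j i, Q j j]).trace := by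
  simp only [iota, Matrix.trace, Matrix.diag_apply, Matrix.mul_apply, Matrix.of_apply, ite_and,
    add_mul, ite_mul, zero_mul, Finset.sum_add_distrib, Finset.sum_ite_eq', Finset.mem_univ,
    if_true, Fin.sum_univ_two, Finset.sum_ite_irrel, Finset.sum_const_zero]
  simp
  ring

open scoped MatrixOrder in
theorem Matrix.PosSemidef.trace_mul_nonneg {m : Type*} [Fintype m] {A B : Matrix m m ℝ}
    (hA : A.PosSemidef) (hB : B.PosSemidef) : 0 ≤ (A * B).trace := by
  classical
  obtain ⟨C, rfl⟩ := CStarAlgebra.nonneg_iff_eq_star_mul_self.mp hA.nonneg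
  rw [Matrix.star_eq_conjTranspose, Matrix.mul_assoc, Matrix.trace_mul_comm]
  exact (hB.mul_mul_conjTranspose_same C).trace_nonneg

/-- The cone of positive semidefinite real matrices is self-dual. -/
theorem Matrix.IsSymm.posSemidef_iff_trace_mul_nonneg {m : Type*} [Fintype m]
    {A : Matrix m m ℝ} (hA : A.IsSymm) :
    A.PosSemidef ↔ ∀ S : Matrix m m ℝ, S.PosSemidef → 0 ≤ (S * A).trace := by
  refine ⟨fun h S hS => hS.trace_mul_nonneg h, fun h => ?_⟩
  refine .of_dotProduct_mulVec_nonneg (by simpa [Matrix.IsHermitian] using hA.eq) fun x => ?_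
  have := h _ (Matrix.posSemidef_vecMulVec_self_star x)
  rwa [Matrix.vecMulVec_mul, Matrix.trace_vecMulVec, dotProduct_comm,
    ← Matrix.dotProduct_mulVec] at this

theorem iota_zero {n : ℕ} (i j : Fin n) : iota i j 0 = 0 := by
  ext r s
  simp [iota]

theorem iota_mem_SDD {n : ℕ} {i j : Fin n} (hij : i < j) {S : Matrix (Fin 2) (Fin 2) ℝ}
    (hS : S.PosSemidef) : iota i j S ∈ SDD n := by
  refine ⟨fun k l => if k = i ∧ l = j then S else 0, fun k l => ?_, ?_⟩
  · dsimp only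
    split_ifs
    exacts [hS, .zero]
  · rw [Finset.sum_eq_single i, Finset.sum_eq_single j]
    · simp [hij]
    · intro l _ hl
      simp [hl, iota_zero]
    · simp
    · intro k _ hk
      refine Finset.sum_eq_zero fun l _ => ?_
      simp [hk, iota_zero]
    · simp

/-- `(SDDⁿ)* = {Q ∈ Sⁿ : ι_{ij}*(Q) ⪰ 0 for all 1 ≤ i < j ≤ n}`. -/
theorem dual_SDD (n : ℕ) :
    dualCone (SDD n) =
      {Q | Q.IsSymm ∧ ∀ i j : Fin n, i < j →
        (!![Q i i, Q i j; Q j i, Q j j]).PosSemidef} := by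
  ext Q
  refine and_congr_right fun hQ => ⟨fun h i j hij => ?_, ?_⟩
  · have hsymm : (!![Q i i, Q i j; Q j i, Q j j]).IsSymm := by
      ext a b
      fin_cases a <;> fin_cases b <;> simp [hQ.apply]
    refine hsymm.posSemidef_iff_trace_mul_nonneg.mpr fun S hS => ?_
    rw [← trace_iota_mul]
    exact h _ (iota_mem_SDD hij hS)
  · rintro h _ ⟨S, hS, rfl⟩
    simp only [Finset.sum_mul, Matrix.trace_sum]
    refine Finset.sum_nonneg fun i _ => Finset.sum_nonneg fun j _ => ?_
    split_ifs with hij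
    · rw [trace_iota_mul]
      exact (hS i j).trace_mul_nonneg (h i j hij)
    · simp

end
end

section
/- The cone of nonnegative scaled diagonally dominant matrices decomposes as SDD^n_+ = Σ_{1≤i<j≤n} ι_{ij}(S²₊ ∩ N²); that is, a symmetric n×n matrix is entrywise nonnegative and scaled diagonally dominant if and only if it is a sum over pairs 1 ≤ i < j ≤ n of embeddings of 2×2 positive semidefinite entrywise nonnegative matrices. -/
open Matrix Set

noncomputable section

/-- `Nⁿ`: symmetric entrywise nonnegative matrices. -/
def NonnegMat (n : ℕ) : Set (Matrix (Fin n) (Fin n) ℝ) :=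
  {X | X.IsSymm ∧ ∀ i j, 0 ≤ X i j}

/-- The strictly upper triangular entries of `Σ_{i<j} ι_{ij}(S i j)` are the entries `S i j 0 1`. -/
lemma sum_iota_apply_of_lt {n : ℕ} (S : Fin n → Fin n → Matrix (Fin 2) (Fin 2) ℝ)
    {r s : Fin n} (h : r < s) :
    (∑ i : Fin n, ∑ j : Fin n, if i < j then iota i j (S i j) else 0) r s = S r s 0 1 := by
  have key : ∀ i j : Fin n, (if i < j then iota i j (S i j) else 0) r s =
      if i = r then (if j = s then S i j 0 1 else 0) else 0 := by
    intro i j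
    by_cases hij : i < j
    · simp only [hij, if_true, iota, Matrix.of_apply]
      grind
    · simp only [hij, if_false, Matrix.zero_apply]
      grind
  simp only [Matrix.sum_apply, key]
  simp

lemma iota_transpose {n : ℕ} (i j : Fin n) {S : Matrix (Fin 2) (Fin 2) ℝ} (hS : S.IsSymm) :
    (iota i j S)ᵀ = iota i j S := by
  ext r s
  have h01 : S 1 0 = S 0 1 := hS.apply 0 1
  simp only [iota, Matrix.transpose_apply, Matrix.of_apply, h01]
  grind

lemma iota_nonneg {n : ℕ} (i j : Fin n) {S : Matrix (Fin 2) (Fin 2) ℝ} (hS : ∀ a b, 0 ≤ S a b)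
    (r s : Fin n) : 0 ≤ iota i j S r s := by
  have key : ∀ (p : Prop) [Decidable p] (a b : Fin 2), 0 ≤ if p then S a b else 0 := by
    intro p _ a b
    split_ifs
    exacts [hS a b, le_rfl]
  simp only [iota, Matrix.of_apply]
  exact add_nonneg (add_nonneg (add_nonneg (key _ _ _) (key _ _ _)) (key _ _ _)) (key _ _ _)

/-- `SDDⁿ₊ = Σ_{1≤i<j≤n} ι_{ij}(S²₊ ∩ N²)`. -/
theorem SDDplus_decomp (n : ℕ) :
    SDD n ∩ NonnegMat n =
      {X | ∃ S : Fin n → Fin n → Matrix (Fin 2) (Fin 2) ℝ,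
        (∀ i j : Fin n, (S i j).PosSemidef ∧ ∀ a b, 0 ≤ S i j a b) ∧
        X = ∑ i : Fin n, ∑ j : Fin n, if i < j then iota i j (S i j) else 0} := by
  ext X
  constructor
  · rintro ⟨⟨S, hS, rfl⟩, -, hX⟩
    refine ⟨fun i j => if i < j then S i j else 0, fun i j => ?_, ?_⟩
    · by_cases hij : i < j
      · simp only [hij, if_true]
        have h01 : 0 ≤ S i j 0 1 := sum_iota_apply_of_lt S hij ▸ hX i j
        have h10 : S i j 1 0 = S i j 0 1 := by
          simpa using (hS i j).isHermitian.apply 0 1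
        refine ⟨hS i j, fun a b => ?_⟩
        fin_cases a <;> fin_cases b
        exacts [(hS i j).diag_nonneg, h01, h10.symm ▸ h01, (hS i j).diag_nonneg]
      · simp only [hij, if_false]
        exact ⟨Matrix.PosSemidef.zero, fun _ _ => le_rfl⟩
    · refine Finset.sum_congr rfl fun i _ => Finset.sum_congr rfl fun j _ => ?_
      split_ifs with hij <;> simp [hij]
  · rintro ⟨S, hS, rfl⟩
    refine ⟨⟨S, fun i j => (hS i j).1, rfl⟩, ?_, fun r s => ?_⟩
    · simp only [Matrix.IsSymm, Matrix.transpose_sum]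
      refine Finset.sum_congr rfl fun i _ => Finset.sum_congr rfl fun j _ => ?_
      split_ifs
      · refine iota_transpose i j ?_
        simpa [Matrix.IsHermitian, Matrix.IsSymm] using (hS i j).1.isHermitian
      · exact Matrix.transpose_zero
    · simp only [Matrix.sum_apply]
      refine Finset.sum_nonneg fun i _ => Finset.sum_nonneg fun j _ => ?_
      split_ifs
      exacts [iota_nonneg i j (hS i j).2 r s, le_rfl]

end
end

section
/- Let U ∈ R^{t×n} have nonnegative entries with each row summing to 1. Then SDD^n_+(U) := U^T (SDD^t_+) U is a closed convex sub-cone of the completely positive cone CP^n. -/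
open Matrix Set

noncomputable section

/-- `SDDⁿ₊ = SDDⁿ ∩ Nⁿ`. -/
def SDDplus (n : ℕ) : Set (Matrix (Fin n) (Fin n) ℝ) := SDD n ∩ NonnegMat n

/-- `SDDⁿ₊(U) = Uᵀ (SDDᵗ₊) U`. -/
def SDDplusU {t n : ℕ} (U : Matrix (Fin t) (Fin n) ℝ) :
    Set (Matrix (Fin n) (Fin n) ℝ) :=
  {X | ∃ Y ∈ SDDplus t, X = Uᵀ * Y * U}

/-- The conic hull: finite nonnegative combinations of elements of `s`. -/
def conicHull {α : Type*} [AddCommMonoid α] [Module ℝ α] (s : Set α) : Set α :=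
  {x | ∃ (N : ℕ) (c : Fin N → ℝ) (v : Fin N → α),
    (∀ k, 0 ≤ c k) ∧ (∀ k, v k ∈ s) ∧ x = ∑ k, c k • v k}

/-- The completely positive cone `CPⁿ`. -/
def CP (n : ℕ) : Set (Matrix (Fin n) (Fin n) ℝ) :=
  {X | ∃ (k : ℕ) (B : Matrix (Fin k) (Fin n) ℝ), (∀ i j, 0 ≤ B i j) ∧ X = Bᵀ * B}

/-- The sum `Σ_{i<j} ι_{ij}(S i j)`. -/
def pairSum {t : ℕ} (S : Fin t → Fin t → Matrix (Fin 2) (Fin 2) ℝ) :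
    Matrix (Fin t) (Fin t) ℝ :=
  ∑ i : Fin t, ∑ j : Fin t, if i < j then iota i j (S i j) else 0

/-- The sum of all entries of a matrix. -/
def entrySum {n : ℕ} (X : Matrix (Fin n) (Fin n) ℝ) : ℝ := ∑ i, ∑ j, X i j

/-- The `2 × n` matrix selecting coordinates `i` and `j`. -/
def pairSelector {n : ℕ} (i j : Fin n) : Matrix (Fin 2) (Fin n) ℝ :=
  Matrix.of ![Pi.single i 1, Pi.single j 1]

theorem iota_eq_selector {n : ℕ} (i j : Fin n) (S : Matrix (Fin 2) (Fin 2) ℝ) :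
    iota i j S = (pairSelector i j)ᵀ * S * pairSelector i j := by
  ext r s
  simp only [iota, pairSelector, Matrix.mul_apply, Fin.sum_univ_two, Matrix.transpose_apply,
    Matrix.of_apply, Matrix.cons_val_zero, Matrix.cons_val_one, Pi.single_apply]
  simp only [ite_and]
  split_ifs <;> ring

theorem pairSelector_nonneg {n : ℕ} (i j : Fin n) (a : Fin 2) (k : Fin n) :
    0 ≤ pairSelector i j a k := by
  fin_cases a <;> simp [pairSelector, Pi.single_apply] <;> split_ifs <;> norm_num

theorem pairSum_add {t : ℕ} (S T : Fin t → Fin t → Matrix (Fin 2) (Fin 2) ℝ) :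
    pairSum (S + T) = pairSum S + pairSum T := by
  simp only [pairSum, ← Finset.sum_add_distrib]
  refine Finset.sum_congr rfl fun i _ => Finset.sum_congr rfl fun j _ => ?_
  split_ifs <;> simp [iota_eq_selector, Matrix.mul_add, Matrix.add_mul]

theorem pairSum_smul {t : ℕ} (c : ℝ) (S : Fin t → Fin t → Matrix (Fin 2) (Fin 2) ℝ) :
    pairSum (c • S) = c • pairSum S := by
  simp only [pairSum, Finset.smul_sum]
  refine Finset.sum_congr rfl fun i _ => Finset.sum_congr rfl fun j _ => ?_
  split_ifs <;> simp [iota_eq_selector]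

theorem continuous_pairSum {t : ℕ} :
    Continuous (pairSum : (Fin t → Fin t → Matrix (Fin 2) (Fin 2) ℝ) → _) := by
  unfold pairSum
  refine continuous_finsetSum _ fun i _ => continuous_finsetSum _ fun j _ => ?_
  split_ifs
  · simp only [iota_eq_selector]
    fun_prop
  · fun_prop

theorem pairSum_apply_of_lt {t : ℕ} (S : Fin t → Fin t → Matrix (Fin 2) (Fin 2) ℝ)
    {i j : Fin t} (hij : i < j) : pairSum S i j = S i j 0 1 := by
  simp only [pairSum, Matrix.sum_apply]
  rw [Finset.sum_eq_single i, Finset.sum_eq_single j]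
  · simp [hij, iota, hij.ne, hij.ne']
  · intro l _ hl
    split_ifs <;> simp [iota, hij.ne', hl.symm]
  · simp
  · intro k _ hk
    refine Finset.sum_eq_zero fun l _ => ?_
    split_ifs with h
    · simp only [iota, Matrix.of_apply]
      grind
    · rfl
  · simp

theorem trace_iota {t : ℕ} (i j : Fin t) (S : Matrix (Fin 2) (Fin 2) ℝ) (hij : i ≠ j) :
    (iota i j S).trace = S.trace := by
  simp only [Matrix.trace, Matrix.diag, iota, Matrix.of_apply, Finset.sum_add_distrib, and_self,
    Fin.sum_univ_two]
  have h1 (r : Fin t) : ¬ (r = i ∧ r = j) := by grind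
  have h2 (r : Fin t) : ¬ (r = j ∧ r = i) := by grind
  simp [h1, h2]

theorem trace_pairSum {t : ℕ} (S : Fin t → Fin t → Matrix (Fin 2) (Fin 2) ℝ) :
    (pairSum S).trace = ∑ i, ∑ j, if i < j then (S i j).trace else 0 := by
  simp only [pairSum, Matrix.trace_sum]
  refine Finset.sum_congr rfl fun i _ => Finset.sum_congr rfl fun j _ => ?_
  split_ifs with h
  · exact trace_iota i j _ h.ne
  · simp

theorem Matrix.PosSemidef.sq_le_mul_fin_two {S : Matrix (Fin 2) (Fin 2) ℝ} (hS : S.PosSemidef) :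
    S 1 0 = S 0 1 ∧ S 0 1 ^ 2 ≤ S 0 0 * S 1 1 := by
  have h1 : S 1 0 = S 0 1 := by simpa using hS.isHermitian.apply 0 1
  have h2 := hS.det_nonneg
  rw [Matrix.det_fin_two, h1] at h2
  exact ⟨h1, by linarith⟩

theorem Matrix.PosSemidef.abs_apply_le_trace_fin_two {S : Matrix (Fin 2) (Fin 2) ℝ} (hS : S.PosSemidef)
    (a b : Fin 2) : |S a b| ≤ S.trace := by
  obtain ⟨h1, h2⟩ := hS.sq_le_mul_fin_two
  have h3 : 0 ≤ S 0 0 := hS.diag_nonneg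
  have h4 : 0 ≤ S 1 1 := hS.diag_nonneg
  have h5 : |S 0 1| ≤ S 0 0 + S 1 1 := abs_le_of_sq_le_sq (by nlinarith) (by linarith)
  rw [Matrix.trace_fin_two]
  fin_cases a <;> fin_cases b <;> simp [h1, abs_of_nonneg h3, abs_of_nonneg h4, h5] <;> assumption

theorem Matrix.isClosed_posSemidef {m : Type*} [Fintype m] :
    IsClosed {S : Matrix m m ℝ | S.PosSemidef} := by
  simp only [Matrix.posSemidef_iff_dotProduct_mulVec, ofPred_and, ofPred_forall]
  refine IsClosed.inter ?_ (isClosed_iInter fun x => ?_)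
  · exact isClosed_eq (by fun_prop) (by fun_prop)
  · exact isClosed_le (by fun_prop) (by fun_prop)

theorem entrySum_conj {t n : ℕ} {U : Matrix (Fin t) (Fin n) ℝ} (hrow : ∀ i, ∑ j, U i j = 1)
    (Y : Matrix (Fin t) (Fin t) ℝ) : entrySum (Uᵀ * Y * U) = entrySum Y := by
  have key {k : ℕ} (X : Matrix (Fin k) (Fin k) ℝ) : entrySum X = 1 ⬝ᵥ X *ᵥ 1 := by
    simp [entrySum, dotProduct, Matrix.mulVec]
  have h1 : U *ᵥ 1 = 1 := by
    ext i
    simpa [Matrix.mulVec, dotProduct] using hrow i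
  rw [key, key, ← Matrix.mulVec_mulVec, ← Matrix.mulVec_mulVec, h1, Matrix.dotProduct_mulVec,
    Matrix.vecMul_transpose, h1]

theorem trace_le_entrySum {t : ℕ} {Y : Matrix (Fin t) (Fin t) ℝ} (hY : ∀ i j, 0 ≤ Y i j) :
    Y.trace ≤ entrySum Y :=
  Finset.sum_le_sum fun i _ =>
    Finset.single_le_sum (f := fun j => Y i j) (fun j _ => hY i j) (Finset.mem_univ i)

theorem zero_mem_CP (n : ℕ) : (0 : Matrix (Fin n) (Fin n) ℝ) ∈ CP n :=
  ⟨0, 0, fun _ _ => le_rfl, by simp⟩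

theorem add_mem_CP {n : ℕ} {X Y : Matrix (Fin n) (Fin n) ℝ} (hX : X ∈ CP n) (hY : Y ∈ CP n) :
    X + Y ∈ CP n := by
  obtain ⟨k, B, hB, rfl⟩ := hX
  obtain ⟨l, C, hC, rfl⟩ := hY
  refine ⟨k + l, Matrix.of fun i j => Fin.append (B · j) (C · j) i, fun i j => ?_, ?_⟩
  · refine Fin.addCases (fun i => ?_) (fun i => ?_) i
    · simpa only [Matrix.of_apply, Fin.append_left] using hB i j
    · simpa only [Matrix.of_apply, Fin.append_right] using hC i j
  · ext i j
    simp only [Matrix.add_apply, Matrix.mul_apply, Matrix.transpose_apply, Fin.sum_univ_add,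
      Matrix.of_apply, Fin.append_left, Fin.append_right]

theorem sum_mem_CP {n : ℕ} {ι : Type*} (s : Finset ι) (X : ι → Matrix (Fin n) (Fin n) ℝ)
    (hX : ∀ i ∈ s, X i ∈ CP n) : ∑ i ∈ s, X i ∈ CP n :=
  Finset.sum_induction X (· ∈ CP n) (fun _ _ => add_mem_CP) (zero_mem_CP n) hX

theorem conj_mem_CP {m n : ℕ} {X : Matrix (Fin m) (Fin m) ℝ} (hX : X ∈ CP m)
    {V : Matrix (Fin m) (Fin n) ℝ} (hV : ∀ i j, 0 ≤ V i j) : Vᵀ * X * V ∈ CP n := by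
  obtain ⟨k, B, hB, rfl⟩ := hX
  refine ⟨k, B * V, fun i j => ?_, ?_⟩
  · rw [Matrix.mul_apply]
    exact Finset.sum_nonneg fun l _ => mul_nonneg (hB i l) (hV l j)
  · simp only [Matrix.transpose_mul, Matrix.mul_assoc]

/-- A doubly nonnegative `2 × 2` matrix is completely positive. -/
theorem Matrix.PosSemidef.mem_CP_two {S : Matrix (Fin 2) (Fin 2) ℝ} (hS : S.PosSemidef)
    (h : 0 ≤ S 0 1) : S ∈ CP 2 := by
  obtain ⟨h1, h2⟩ := hS.sq_le_mul_fin_two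
  have h3 : 0 ≤ S 0 0 := hS.diag_nonneg
  have h4 : 0 ≤ S 1 1 := hS.diag_nonneg
  refine ⟨2, !![√(S 0 0), S 0 1 / √(S 0 0); 0, √(S 1 1 - S 0 1 ^ 2 / S 0 0)], ?_, ?_⟩
  · intro i j
    fin_cases i <;> fin_cases j <;> (simp; try positivity)
  have h5 : 0 ≤ S 1 1 - S 0 1 ^ 2 / S 0 0 := by
    rcases h3.eq_or_lt with h0 | h0
    · simpa [← h0] using h4
    · rw [sub_nonneg, div_le_iff₀ h0]
      linarith
  have h6 : √(S 0 0) * (S 0 1 / √(S 0 0)) = S 0 1 := by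
    rcases h3.eq_or_lt with h0 | h0
    · have : S 0 1 = 0 := by
        rw [← h0, zero_mul] at h2
        exact pow_eq_zero_iff two_ne_zero |>.1 (le_antisymm h2 (sq_nonneg _))
      simp [this]
    · exact mul_div_cancel₀ _ (Real.sqrt_pos.2 h0).ne'
  ext i j
  fin_cases i <;> fin_cases j <;>
    simp [Matrix.mul_apply, Fin.sum_univ_two, h1, h6, mul_comm (S 0 1 / _), Real.mul_self_sqrt h3,
      Real.mul_self_sqrt h5]
  rw [div_mul_div_comm, Real.mul_self_sqrt h3]
  ring

/-- The image of a closed set under a continuous map is closed if the points of the set mapping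
into a sublevel set of some continuous function all lie in a compact set. -/
theorem isClosed_image_of_compact_sublevel {E F : Type*} [TopologicalSpace E] [TopologicalSpace F]
    [T2Space F] {f : E → F} (hf : Continuous f) {g : F → ℝ} (hg : Continuous g) {C : Set E}
    (hC : IsClosed C) (K : ℝ → Set E) (hK : ∀ r, IsCompact (K r))
    (h : ∀ r, ∀ x ∈ C, g (f x) ≤ r → x ∈ K r) : IsClosed (f '' C) := by
  refine isClosed_of_closure_subset fun y hy => ?_
  set r := g y + 1
  have hopen : IsOpen {z | g z < r} := isOpen_lt hg continuous_const
  have hyc : y ∈ closure ({z | g z < r} ∩ f '' C) :=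
    hopen.inter_closure ⟨lt_add_one (g y), hy⟩
  have hsub : {z | g z < r} ∩ f '' C ⊆ f '' (K r ∩ C) := by
    rintro _ ⟨hz, x, hx, rfl⟩
    exact ⟨x, ⟨h r x hx (le_of_lt hz), hx⟩, rfl⟩
  have hcl : IsClosed (f '' (K r ∩ C)) := (((hK r).inter_right hC).image hf).isClosed
  exact image_mono inter_subset_right (closure_minimal hsub hcl hyc)

/-- Families of positive semidefinite `2 × 2` matrices, supported on pairs `i < j`, for which
`pairSum` is symmetric and entrywise nonnegative. -/
def sddParams (t : ℕ) : Set (Fin t → Fin t → Matrix (Fin 2) (Fin 2) ℝ) :=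
  {S | (∀ i j, (S i j).PosSemidef) ∧ (∀ i j, ¬ i < j → S i j = 0) ∧ pairSum S ∈ NonnegMat t}

theorem isClosed_nonnegMat (n : ℕ) : IsClosed (NonnegMat n) := by
  simp only [NonnegMat, ofPred_and, ofPred_forall]
  refine IsClosed.inter (isClosed_eq (by fun_prop) continuous_id) ?_
  exact isClosed_iInter fun i => isClosed_iInter fun j =>
    isClosed_le continuous_const (continuous_id.matrix_elem i j)

theorem isClosed_sddParams (t : ℕ) : IsClosed (sddParams t) := by
  simp only [sddParams, ofPred_and, ofPred_forall]
  refine IsClosed.inter ?_ (IsClosed.inter ?_ ((isClosed_nonnegMat t).preimage continuous_pairSum))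
  · exact isClosed_iInter fun i => isClosed_iInter fun j =>
      Matrix.isClosed_posSemidef.preimage (by fun_prop : Continuous fun S :
        Fin t → Fin t → Matrix (Fin 2) (Fin 2) ℝ => S i j)
  · exact isClosed_iInter fun i => isClosed_iInter fun j => isClosed_iInter fun _ =>
      isClosed_eq (by fun_prop) continuous_const

theorem SDDplusU_eq_image {t n : ℕ} (U : Matrix (Fin t) (Fin n) ℝ) :
    SDDplusU U = (fun S => Uᵀ * pairSum S * U) '' sddParams t := by
  ext X
  constructor
  · rintro ⟨_, ⟨⟨S, hS, rfl⟩, hY⟩, rfl⟩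
    have heq : pairSum (fun i j => if i < j then S i j else 0) = pairSum S := by
      unfold pairSum
      refine Finset.sum_congr rfl fun i _ => Finset.sum_congr rfl fun j _ => ?_
      split_ifs with h
      · simp only [if_pos h]
      · rfl
    refine ⟨fun i j => if i < j then S i j else 0, ⟨fun i j => ?_, fun i j h => if_neg h, ?_⟩, ?_⟩
    · dsimp only
      split_ifs
      exacts [hS i j, .zero]
    · rw [heq]
      exact hY
    · simp only [heq]
      rfl
  · rintro ⟨S, ⟨hS, -, hN⟩, rfl⟩
    exact ⟨pairSum S, ⟨⟨S, hS, rfl⟩, hN⟩, rfl⟩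

theorem abs_apply_le_entrySum_pairSum {t : ℕ} {S : Fin t → Fin t → Matrix (Fin 2) (Fin 2) ℝ}
    (hS : S ∈ sddParams t) (i j : Fin t) (a b : Fin 2) : |S i j a b| ≤ entrySum (pairSum S) := by
  obtain ⟨hpos, hsupp, hN⟩ := hS
  have hnn (i j : Fin t) : 0 ≤ if i < j then (S i j).trace else 0 := by
    split_ifs
    exacts [(hpos i j).trace_nonneg, le_rfl]
  calc |S i j a b| ≤ (S i j).trace := (hpos i j).abs_apply_le_trace_fin_two a b
    _ = if i < j then (S i j).trace else 0 := by
      split_ifs with h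
      · rfl
      · simp [hsupp i j h]
    _ ≤ ∑ j, if i < j then (S i j).trace else 0 :=
      Finset.single_le_sum (f := fun j => if i < j then (S i j).trace else 0)
        (fun j _ => hnn i j) (Finset.mem_univ j)
    _ ≤ ∑ i, ∑ j, if i < j then (S i j).trace else 0 :=
      Finset.single_le_sum (f := fun i => ∑ j, if i < j then (S i j).trace else 0)
        (fun i _ => Finset.sum_nonneg fun j _ => hnn i j) (Finset.mem_univ i)
    _ = (pairSum S).trace := (trace_pairSum S).symm
    _ ≤ entrySum (pairSum S) := trace_le_entrySum hN.2

theorem isClosed_SDDplusU {t n : ℕ} {U : Matrix (Fin t) (Fin n) ℝ}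
    (hrow : ∀ i, ∑ j, U i j = 1) : IsClosed (SDDplusU U) := by
  rw [SDDplusU_eq_image]
  have hc := continuous_pairSum (t := t)
  refine isClosed_image_of_compact_sublevel (g := entrySum) (by fun_prop)
    (by unfold entrySum; fun_prop) (isClosed_sddParams t)
    (fun r => univ.pi fun _ => univ.pi fun _ => univ.pi fun _ => univ.pi fun _ => Icc (-r) r)
    (fun r => isCompact_univ_pi fun _ => isCompact_univ_pi fun _ => isCompact_univ_pi fun _ =>
      isCompact_univ_pi fun _ => isCompact_Icc) ?_
  intro r S hS hr i _ j _ a _ b _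
  rw [entrySum_conj hrow] at hr
  exact abs_le.1 ((abs_apply_le_entrySum_pairSum hS i j a b).trans hr)

theorem add_mem_sddParams {t : ℕ} {S T : Fin t → Fin t → Matrix (Fin 2) (Fin 2) ℝ}
    (hS : S ∈ sddParams t) (hT : T ∈ sddParams t) : S + T ∈ sddParams t := by
  refine ⟨fun i j => (hS.1 i j).add (hT.1 i j), fun i j h => ?_, ?_⟩
  · simp [hS.2.1 i j h, hT.2.1 i j h]
  · rw [pairSum_add]
    exact ⟨hS.2.2.1.add hT.2.2.1, fun i j => add_nonneg (hS.2.2.2 i j) (hT.2.2.2 i j)⟩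

theorem smul_mem_sddParams {t : ℕ} {S : Fin t → Fin t → Matrix (Fin 2) (Fin 2) ℝ} {c : ℝ}
    (hc : 0 ≤ c) (hS : S ∈ sddParams t) : c • S ∈ sddParams t := by
  refine ⟨fun i j => (hS.1 i j).smul hc, fun i j h => ?_, ?_⟩
  · simp [hS.2.1 i j h]
  · rw [pairSum_smul]
    exact ⟨hS.2.2.1.smul c, fun i j => mul_nonneg hc (hS.2.2.2 i j)⟩

theorem pairSum_mem_CP {t : ℕ} {S : Fin t → Fin t → Matrix (Fin 2) (Fin 2) ℝ}
    (hS : S ∈ sddParams t) : pairSum S ∈ CP t := by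
  refine sum_mem_CP _ _ fun i _ => sum_mem_CP _ _ fun j _ => ?_
  split_ifs with h
  · rw [iota_eq_selector]
    refine conj_mem_CP ((hS.1 i j).mem_CP_two ?_) (pairSelector_nonneg i j)
    rw [← pairSum_apply_of_lt S h]
    exact hS.2.2.2 i j
  · exact zero_mem_CP t

/-- `SDDⁿ₊(U)` is a closed convex sub-cone of the completely positive cone `CPⁿ`. -/
theorem SDDplusU_closed_subcone_CP {t n : ℕ} (U : Matrix (Fin t) (Fin n) ℝ)
    (hU : ∀ i j, 0 ≤ U i j) (hrow : ∀ i, ∑ j, U i j = 1) :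
    IsClosed (SDDplusU U) ∧
    (∀ X ∈ SDDplusU U, ∀ Y ∈ SDDplusU U, X + Y ∈ SDDplusU U) ∧
    (∀ c : ℝ, 0 ≤ c → ∀ X ∈ SDDplusU U, c • X ∈ SDDplusU U) ∧
    SDDplusU U ⊆ CP n := by
  refine ⟨isClosed_SDDplusU hrow, ?_, ?_, ?_⟩ <;> rw [SDDplusU_eq_image]
  · rintro _ ⟨S, hS, rfl⟩ _ ⟨T, hT, rfl⟩
    exact ⟨S + T, add_mem_sddParams hS hT, by simp [pairSum_add, Matrix.mul_add, Matrix.add_mul]⟩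
  · rintro c hc _ ⟨S, hS, rfl⟩
    exact ⟨c • S, smul_mem_sddParams hc hS, by simp [pairSum_smul]⟩
  · rintro _ ⟨S, hS, rfl⟩
    exact conj_mem_CP (pairSum_mem_CP hS) hU

end
end

section
/- Let G be a graph on vertices {1,…,t} with edge set E, and let U ∈ R^{t×n} have nonnegative entries with each row summing to 1, with u_i the i-th row of U. Then any element X ∈ SDD^G_+(U) := U^T (SDD^G_+) U can be written as X = Σ_{i=1}^t λ_i u_i u_i^T + Σ_{{i,j}∈E} γ_{ij} w_{ij} w_{ij}^T, where w_{ij} ∈ [u_i, u_j] and λ_i ≥ 0, γ_{ij} ≥ 0 for all i and all {i,j} ∈ E. -/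
open Matrix Set

noncomputable section

open scoped Classical in
/-- `SDD^G = Σ_{{i,j}∈E} ι_{ij}(S²₊)` (equal to `{0}` if `E = ∅`). -/
def SDDG {t : ℕ} (G : SimpleGraph (Fin t)) : Set (Matrix (Fin t) (Fin t) ℝ) :=
  {X | ∃ S : Fin t → Fin t → Matrix (Fin 2) (Fin 2) ℝ,
    (∀ i j : Fin t, (S i j).PosSemidef) ∧
    X = ∑ i : Fin t, ∑ j : Fin t, if i < j ∧ G.Adj i j then iota i j (S i j) else 0}

/-- `SDD^G₊ = SDD^G ∩ Nᵗ`. -/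
def SDDGplus {t : ℕ} (G : SimpleGraph (Fin t)) : Set (Matrix (Fin t) (Fin t) ℝ) :=
  SDDG G ∩ NonnegMat t

/-- `SDD^G₊(U) = Uᵀ (SDD^G₊) U`. -/
def SDDGplusU {t n : ℕ} (G : SimpleGraph (Fin t)) (U : Matrix (Fin t) (Fin n) ℝ) :
    Set (Matrix (Fin n) (Fin n) ℝ) :=
  {X | ∃ Y ∈ SDDGplus G, X = Uᵀ * Y * U}

/-- `seg(G,U) = ∪_{{i,j}∈E} [uᵢ, uⱼ]`. -/
def seg {t n : ℕ} (G : SimpleGraph (Fin t)) (U : Matrix (Fin t) (Fin n) ℝ) :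
    Set (Fin n → ℝ) :=
  {v | ∃ i j : Fin t, G.Adj i j ∧ v ∈ segment ℝ (U i) (U j)}

/-- Conjugating `ι_{ij}(S)` by `U` gives a combination of outer products of rows of `U`. -/
lemma transpose_mul_iota_mul {t n : ℕ} (U : Matrix (Fin t) (Fin n) ℝ) (i j : Fin t)
    (S : Matrix (Fin 2) (Fin 2) ℝ) :
    Uᵀ * iota i j S * U =
      S 0 0 • vecMulVec (U i) (U i) + S 0 1 • vecMulVec (U i) (U j) +
        S 1 0 • vecMulVec (U j) (U i) + S 1 1 • vecMulVec (U j) (U j) := by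
  have h : iota i j S = single i i (S 0 0) + single i j (S 0 1) +
      single j i (S 1 0) + single j j (S 1 1) := by
    ext r s
    simp only [iota, of_apply, Matrix.add_apply, single_apply, eq_comm]
  have hs (k l : Fin t) (c : ℝ) : Uᵀ * single k l c * U = c • vecMulVec (U k) (U l) := by
    ext r s
    simp [mul_apply, single_apply, vecMulVec_apply, ite_and]
    ring
  rw [h]
  simp only [Matrix.mul_add, Matrix.add_mul, hs]

/-- An entry of `ι_{ab}(S)` strictly above the diagonal vanishes off position `(a, b)`. -/
lemma iota_apply_eq_zero {n : ℕ} {a b i j : Fin n} (hab : a < b) (hij : i < j)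
    (h : ¬(i = a ∧ j = b)) (S : Matrix (Fin 2) (Fin 2) ℝ) : iota a b S i j = 0 := by
  simp only [iota, of_apply]
  grind

lemma iota_apply_left_right {n : ℕ} {i j : Fin n} (hij : i < j)
    (S : Matrix (Fin 2) (Fin 2) ℝ) : iota i j S i j = S 0 1 := by
  simp [iota, hij.ne, hij.ne']

open scoped Classical in
/-- An edge entry of an element of `SDD^G` is the off-diagonal entry of the block at that edge. -/
lemma sum_iota_apply_of_adj {t : ℕ} (G : SimpleGraph (Fin t))
    (S : Fin t → Fin t → Matrix (Fin 2) (Fin 2) ℝ) {i j : Fin t} (hij : i < j)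
    (hadj : G.Adj i j) :
    (∑ a : Fin t, ∑ b : Fin t, if a < b ∧ G.Adj a b then iota a b (S a b) else 0) i j =
      S i j 0 1 := by
  have hzero (a b : Fin t) (h : ¬(i = a ∧ j = b)) :
      (if a < b ∧ G.Adj a b then iota a b (S a b) else 0) i j = 0 := by
    split_ifs with hab
    · exact iota_apply_eq_zero hab.1 hij h _
    · rfl
  simp only [Matrix.sum_apply]
  rw [Finset.sum_eq_single i, Finset.sum_eq_single j, if_pos ⟨hij, hadj⟩,
    iota_apply_left_right hij]
  · exact fun b _ hb => hzero i b fun h => hb h.2.symm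
  · simp
  · exact fun a _ ha => Finset.sum_eq_zero fun b _ => hzero a b fun h => ha h.1.symm
  · simp

/-- A `2 × 2` positive semidefinite form with nonnegative off-diagonal entry, evaluated at vectors
`u, v`, is a nonnegative multiple of `v vᵀ` plus a nonnegative multiple of `w wᵀ` for some
`w` in the segment `[u, v]`. -/
lemma exists_segment_decomposition {n : ℕ} (u v : Fin n → ℝ) {S : Matrix (Fin 2) (Fin 2) ℝ}
    (hS : S.PosSemidef) (hb : 0 ≤ S 0 1) :
    ∃ (m g : ℝ) (w : Fin n → ℝ), 0 ≤ m ∧ 0 ≤ g ∧ w ∈ segment ℝ u v ∧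
      S 0 0 • vecMulVec u u + S 0 1 • vecMulVec u v +
        S 1 0 • vecMulVec v u + S 1 1 • vecMulVec v v =
      m • vecMulVec v v + g • vecMulVec w w := by
  have hsymm : S 1 0 = S 0 1 := by simpa using hS.isHermitian.apply 0 1
  have ha : 0 ≤ S 0 0 := hS.diag_nonneg
  have hc : 0 ≤ S 1 1 := hS.diag_nonneg
  have hdet : 0 ≤ S 0 0 * S 1 1 - S 0 1 * S 0 1 := by
    simpa [det_fin_two, hsymm] using hS.det_nonneg
  rw [hsymm]
  generalize S 0 0 = a, S 0 1 = b, S 1 1 = c at *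
  rcases ha.eq_or_lt with rfl | ha
  · obtain rfl : b = 0 := by nlinarith
    exact ⟨c, 0, u, hc, le_rfl, left_mem_segment ℝ u v, by simp⟩
  · have hs : 0 < a + b := by positivity
    refine ⟨(a * c - b * b) / a, (a + b) ^ 2 / a, (a / (a + b)) • u + (b / (a + b)) • v,
      by positivity, by positivity,
      ⟨a / (a + b), b / (a + b), by positivity, by positivity, by field_simp, rfl⟩, ?_⟩
    ext r s
    simp only [Matrix.add_apply, Matrix.smul_apply, vecMulVec_apply, Pi.add_apply,
      Pi.smul_apply, smul_eq_mul]
    field_simp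
    ring

open scoped Classical in
/-- Any `X ∈ SDD^G₊(U)` can be written as
`X = Σᵢ λᵢ uᵢuᵢᵀ + Σ_{{i,j}∈E} γᵢⱼ wᵢⱼwᵢⱼᵀ` with `wᵢⱼ ∈ [uᵢ,uⱼ]`, `λᵢ, γᵢⱼ ≥ 0`. -/
theorem SDDGplusU_decomposition {t n : ℕ} (G : SimpleGraph (Fin t))
    (U : Matrix (Fin t) (Fin n) ℝ)
    (hU : ∀ i j, 0 ≤ U i j) (hrow : ∀ i, ∑ j, U i j = 1)
    (X : Matrix (Fin n) (Fin n) ℝ) (hX : X ∈ SDDGplusU G U) :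
    ∃ (lam : Fin t → ℝ) (gam : Fin t → Fin t → ℝ) (w : Fin t → Fin t → (Fin n → ℝ)),
      (∀ i, 0 ≤ lam i) ∧ (∀ i j, 0 ≤ gam i j) ∧
      (∀ i j : Fin t, i < j → G.Adj i j → w i j ∈ segment ℝ (U i) (U j)) ∧
      X = (∑ i : Fin t, lam i • vecMulVec (U i) (U i)) +
          ∑ i : Fin t, ∑ j : Fin t,
            if i < j ∧ G.Adj i j then gam i j • vecMulVec (w i j) (w i j) else 0 := by
  obtain ⟨Y, ⟨⟨S, hS, rfl⟩, -, hY⟩, rfl⟩ := hX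
  have hblock (i j : Fin t) : ∃ (m g : ℝ) (w : Fin n → ℝ), 0 ≤ m ∧ 0 ≤ g ∧
      (i < j ∧ G.Adj i j → w ∈ segment ℝ (U i) (U j) ∧
        Uᵀ * iota i j (S i j) * U = m • vecMulVec (U j) (U j) + g • vecMulVec w w) := by
    by_cases h : i < j ∧ G.Adj i j
    · have hb : 0 ≤ S i j 0 1 := sum_iota_apply_of_adj G S h.1 h.2 ▸ hY i j
      obtain ⟨m, g, w, hm, hg, hw, heq⟩ :=
        exists_segment_decomposition (U i) (U j) (hS i j) hb
      exact ⟨m, g, w, hm, hg, fun _ => ⟨hw, (transpose_mul_iota_mul U i j _).trans heq⟩⟩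
    · exact ⟨0, 0, 0, le_rfl, le_rfl, fun h' => absurd h' h⟩
  choose m g w hm hg hw using hblock
  refine ⟨fun j => ∑ i, if i < j ∧ G.Adj i j then m i j else 0, g, w, fun j =>
    Finset.sum_nonneg fun i _ => by split_ifs <;> simp [hm], hg,
    fun i j hij hadj => (hw i j ⟨hij, hadj⟩).1, ?_⟩
  simp only [Finset.sum_smul]
  conv_rhs => rw [Finset.sum_comm, ← Finset.sum_add_distrib]
  simp only [← Finset.sum_add_distrib, Matrix.mul_sum, Matrix.sum_mul]
  refine Finset.sum_congr rfl fun i _ => Finset.sum_congr rfl fun j _ => ?_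
  split_ifs with h
  · exact (hw i j h).2
  · simp

end
end

section
/- Every 2×2 real symmetric matrix M that is positive semidefinite and entrywise nonnegative can be decomposed as M = vv^T + diag(a,b) for some vector v ∈ R² with nonnegative entries and some scalars a ≥ 0, b ≥ 0. -/
open Matrix

/-- Every 2×2 real symmetric PSD entrywise nonnegative matrix `M` can be written as
`M = vvᵀ + diag(a, b)` with `v ≥ 0`, `a ≥ 0`, `b ≥ 0`. -/
theorem psd_nonneg_two_by_two_decomp (M : Matrix (Fin 2) (Fin 2) ℝ)
    (hpsd : M.PosSemidef) (hnn : ∀ i j, 0 ≤ M i j) :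
    ∃ (v : Fin 2 → ℝ) (a b : ℝ), (∀ i, 0 ≤ v i) ∧ 0 ≤ a ∧ 0 ≤ b ∧
      M = vecMulVec v v + Matrix.diagonal ![a, b] := by
  have hsymm : M 1 0 = M 0 1 := by simpa using hpsd.isHermitian.apply 0 1
  have hdet : M 0 1 ^ 2 ≤ M 1 1 * M 0 0 := by
    have h := hpsd.det_nonneg
    rw [det_fin_two, hsymm] at h
    linarith
  have hoff : √(M 0 0) * (M 0 1 / √(M 0 0)) = M 0 1 := by
    refine mul_div_cancel_of_imp' fun h => ?_
    rw [Real.sqrt_eq_zero (hnn 0 0)] at h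
    rw [h, mul_zero] at hdet
    exact pow_eq_zero_iff two_ne_zero |>.mp (le_antisymm hdet (sq_nonneg _))
  refine ⟨![√(M 0 0), M 0 1 / √(M 0 0)], 0, M 1 1 - (M 0 1 / √(M 0 0)) ^ 2, ?_, le_rfl, ?_, ?_⟩
  · intro i
    fin_cases i
    · exact Real.sqrt_nonneg _
    · exact div_nonneg (hnn 0 1) (Real.sqrt_nonneg _)
  · rw [div_pow, Real.sq_sqrt (hnn 0 0), sub_nonneg]
    exact div_le_of_le_mul₀ (hnn 0 0) (hnn 1 1) hdet
  · ext i j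
    fin_cases i <;> fin_cases j
    · simp [Real.mul_self_sqrt (hnn 0 0)]
    · simp [hoff]
    · simp [hsymm, mul_comm _ √(M 0 0), hoff]
    · simp [sq]
end

section
/- The cone DD^n_+ of n×n symmetric entrywise nonnegative diagonally dominant matrices equals the conic hull of the matrices (e_i + e_j)(e_i + e_j)^T for 1 ≤ i ≤ j ≤ n, where e_1,…,e_n are the standard basis vectors of R^n. -/
open Matrix Set

noncomputable section

/-- `DDⁿ₊`: symmetric, entrywise nonnegative, diagonally dominant matrices. -/
def DDplus (n : ℕ) : Set (Matrix (Fin n) (Fin n) ℝ) :=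
  {A | A.IsSymm ∧ (∀ i j, 0 ≤ A i j) ∧
    ∀ i : Fin n, ∑ j ∈ Finset.univ.erase i, |A i j| ≤ A i i}

theorem mem_DDplus_iff {n : ℕ} {A : Matrix (Fin n) (Fin n) ℝ} :
    A ∈ DDplus n ↔ A.IsSymm ∧ (∀ i j, 0 ≤ A i j) ∧ ∀ i, ∑ j, A i j ≤ 2 * A i i := by
  refine and_congr_right fun _ => and_congr_right fun h0 => forall_congr' fun i => ?_
  simp only [abs_of_nonneg (h0 _ _)]
  rw [← Finset.add_sum_erase _ _ (Finset.mem_univ i)]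
  constructor <;> intro h <;> linarith

theorem zero_mem_DDplus (n : ℕ) : (0 : Matrix (Fin n) (Fin n) ℝ) ∈ DDplus n := by
  simp [mem_DDplus_iff]

theorem add_mem_DDplus {n : ℕ} {A B : Matrix (Fin n) (Fin n) ℝ}
    (hA : A ∈ DDplus n) (hB : B ∈ DDplus n) : A + B ∈ DDplus n := by
  rw [mem_DDplus_iff] at *
  refine ⟨hA.1.add hB.1, fun i j => add_nonneg (hA.2.1 i j) (hB.2.1 i j), fun i => ?_⟩
  simp only [Matrix.add_apply, Finset.sum_add_distrib]
  linarith [hA.2.2 i, hB.2.2 i]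

theorem smul_mem_DDplus {n : ℕ} {A : Matrix (Fin n) (Fin n) ℝ} {c : ℝ} (hc : 0 ≤ c)
    (hA : A ∈ DDplus n) : c • A ∈ DDplus n := by
  rw [mem_DDplus_iff] at *
  refine ⟨hA.1.smul c, fun i j => mul_nonneg hc (hA.2.1 i j), fun i => ?_⟩
  simp only [Matrix.smul_apply, smul_eq_mul, ← Finset.mul_sum]
  linarith [mul_le_mul_of_nonneg_left (hA.2.2 i) hc]

theorem vecMulVec_single_add_single_mem_DDplus {n : ℕ} (i j : Fin n) :
    vecMulVec (Pi.single i (1 : ℝ) + Pi.single j 1) (Pi.single i (1 : ℝ) + Pi.single j 1) ∈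
      DDplus n := by
  rw [mem_DDplus_iff]
  refine ⟨?_, fun a b => ?_, fun a => ?_⟩
  · ext a b
    simp only [transpose_apply, vecMulVec_apply, mul_comm]
  · simp only [vecMulVec_apply, Pi.add_apply, Pi.single_apply]
    positivity
  · simp only [vecMulVec_apply, ← Finset.mul_sum, Pi.add_apply, Finset.sum_add_distrib,
      Pi.single_apply]
    simp only [Finset.sum_ite_eq', Finset.mem_univ, if_true]
    split_ifs <;> norm_num

theorem sum_smul_mem_conicHull {α ι : Type*} [AddCommMonoid α] [Module ℝ α] [Fintype ι]
    {s : Set α} (c : ι → ℝ) (v : ι → α) (hc : ∀ k, 0 ≤ c k) (hv : ∀ k, v k ∈ s) :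
    ∑ k, c k • v k ∈ conicHull s :=
  let e := (Fintype.equivFin ι).symm
  ⟨Fintype.card ι, c ∘ e, v ∘ e, fun _ => hc _, fun _ => hv _,
    (e.sum_comp fun k => c k • v k).symm⟩

theorem sum_smul_vecMulVec_single_add_single_apply {n : ℕ} (c : Fin n → Fin n → ℝ)
    (a b : Fin n) :
    (∑ p : Fin n × Fin n, c p.1 p.2 •
      vecMulVec (Pi.single p.1 (1 : ℝ) + Pi.single p.2 1)
        (Pi.single p.1 (1 : ℝ) + Pi.single p.2 1)) a b =
      c a b + c b a + if a = b then ∑ k, c a k + ∑ k, c k a else 0 := by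
  simp only [Matrix.sum_apply, Matrix.smul_apply, vecMulVec_apply, Pi.add_apply, smul_eq_mul,
    Pi.single_apply, Fintype.sum_prod_type, mul_add, Finset.sum_add_distrib,
    mul_ite, mul_one, mul_zero]
  rcases eq_or_ne a b with rfl | h
  · simp [Finset.sum_add_distrib]
    ring
  · simp [h]
    ring

/-- Each off-diagonal weight is split evenly between the pairs `(i, j)` and `(j, i)`; the
diagonal weights carry the slack in diagonal dominance. -/
theorem eq_sum_smul_vecMulVec_single_add_single {n : ℕ} {A : Matrix (Fin n) (Fin n) ℝ}
    (hA : A.IsSymm) :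
    A = ∑ p : Fin n × Fin n,
      (if p.1 = p.2 then (2 * A p.1 p.1 - ∑ k, A p.1 k) / 4 else A p.1 p.2 / 2) •
        vecMulVec (Pi.single p.1 (1 : ℝ) + Pi.single p.2 1)
          (Pi.single p.1 (1 : ℝ) + Pi.single p.2 1) := by
  ext a b
  rw [sum_smul_vecMulVec_single_add_single_apply
    (fun i j => if i = j then (2 * A i i - ∑ k, A i k) / 4 else A i j / 2)]
  rcases eq_or_ne a b with rfl | h
  · have row : ∑ k, (if a = k then (2 * A a a - ∑ l, A a l) / 4 else A a k / 2) =
        (∑ k, A a k) / 4 := by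
      rw [← Finset.add_sum_erase _ _ (Finset.mem_univ a),
        Finset.sum_congr rfl fun k hk => if_neg (Finset.ne_of_mem_erase hk).symm,
        ← Finset.sum_div, Finset.sum_erase_eq_sub (Finset.mem_univ a), if_pos rfl]
      ring
    have col : ∑ k, (if k = a then (2 * A k k - ∑ l, A k l) / 4 else A k a / 2) =
        (∑ k, A a k) / 4 := by
      rw [← row]
      refine Finset.sum_congr rfl fun k _ => ?_
      rcases eq_or_ne a k with rfl | h
      · rfl
      · rw [if_neg h, if_neg h.symm, hA.apply]
    simp only [if_true, row, col]
    ring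
  · simp only [h, h.symm, if_false, hA.apply a b]
    ring

/-- `DDⁿ₊` is the conic hull of the matrices `(eᵢ+eⱼ)(eᵢ+eⱼ)ᵀ` for `1 ≤ i ≤ j ≤ n`. -/
theorem DDplus_eq_conicHull (n : ℕ) :
    DDplus n = conicHull {M | ∃ i j : Fin n, i ≤ j ∧
      M = vecMulVec (Pi.single i (1 : ℝ) + Pi.single j 1)
            (Pi.single i (1 : ℝ) + Pi.single j 1)} := by
  refine Subset.antisymm (fun A hA => ?_) ?_
  · rw [mem_DDplus_iff] at hA
    rw [eq_sum_smul_vecMulVec_single_add_single hA.1]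
    refine sum_smul_mem_conicHull _ _ (fun p => ?_) fun p => ?_
    · split_ifs
      · linarith [hA.2.2 p.1]
      · linarith [hA.2.1 p.1 p.2]
    · rcases le_total p.1 p.2 with h | h
      · exact ⟨p.1, p.2, h, rfl⟩
      · exact ⟨p.2, p.1, h, by rw [add_comm]⟩
  · rintro _ ⟨N, c, v, hc, hv, rfl⟩
    refine Finset.sum_induction _ (· ∈ DDplus n) (fun _ _ => add_mem_DDplus)
      (zero_mem_DDplus n) fun k _ => smul_mem_DDplus (hc k) ?_
    obtain ⟨i, j, -, h⟩ := hv k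
    exact h ▸ vecMulVec_single_add_single_mem_DDplus i j

end
end
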